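/- Let (H, Φ, R) be a quasitriangular quasi-bialgebra over a field k. Then H*_R is compatible with the H–H^cop-bimodule structure given by the regular actions: for all f, g ∈ H* and h, h' ∈ H one has h⇀(f·g)↼h' = Σ (h₁⇀f↼h'₂)·(h₂⇀g↼h'₁); moreover ε·f = f·ε = f and h⇀ε↼h' = ε(h)ε(h')ε. -/

import Mathlib

open TensorProduct LinearMap

noncomputable section

/-- Left regular action of `H` on its dual: `(h ⇀ p)(x) = p (x * h)`. -/
def lact {k H : Type*} [Field k] [Ring H] [Algebra k H]
    (h : H) (p : Module.Dual k H) : Module.Dual k H :=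
  p ∘ₗ LinearMap.mulRight k h

/-- Right regular action of `H` on its dual: `(p ↼ h)(x) = p (h * x)`. -/
def ract {k H : Type*} [Field k] [Ring H] [Algebra k H]
    (h : H) (p : Module.Dual k H) : Module.Dual k H :=
  p ∘ₗ LinearMap.mulLeft k h

variable (k H : Type*) [Field k] [Ring H] [Algebra k H]

/-- `R ⊗ 1` viewed in `H ⊗ (H ⊗ H)` (the element `R₁₂`). -/
def leg12 (R : H ⊗[k] H) : H ⊗[k] (H ⊗[k] H) :=
  TensorProduct.assoc k H H H (R ⊗ₜ[k] (1 : H))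

/-- The element `R₂₃ = 1 ⊗ R` of `H ⊗ (H ⊗ H)`. -/
def leg23 (R : H ⊗[k] H) : H ⊗[k] (H ⊗[k] H) := (1 : H) ⊗ₜ[k] R

/-- The element `R₁₃` of `H ⊗ (H ⊗ H)`. -/
def leg13 (R : H ⊗[k] H) : H ⊗[k] (H ⊗[k] H) :=
  lTensor H (TensorProduct.comm k H H).toLinearMap (leg12 k H R)

/-- `x ⊗ y ⊗ z ↦ y ⊗ x ⊗ z`. -/
def permYXZ : H ⊗[k] (H ⊗[k] H) →ₗ[k] H ⊗[k] (H ⊗[k] H) :=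
  (TensorProduct.assoc k H H H).toLinearMap
    ∘ₗ rTensor H (TensorProduct.comm k H H).toLinearMap
    ∘ₗ (TensorProduct.assoc k H H H).symm.toLinearMap

/-- `x ⊗ y ⊗ z ↦ x ⊗ z ⊗ y`. -/
def permXZY : H ⊗[k] (H ⊗[k] H) →ₗ[k] H ⊗[k] (H ⊗[k] H) :=
  lTensor H (TensorProduct.comm k H H).toLinearMap

/-- `x ⊗ y ⊗ z ↦ y ⊗ z ⊗ x`. -/
def permYZX : H ⊗[k] (H ⊗[k] H) →ₗ[k] H ⊗[k] (H ⊗[k] H) :=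
  permXZY k H ∘ₗ permYXZ k H

/-- `x ⊗ y ⊗ z ↦ z ⊗ x ⊗ y`. -/
def permZXY : H ⊗[k] (H ⊗[k] H) →ₗ[k] H ⊗[k] (H ⊗[k] H) :=
  permYXZ k H ∘ₗ permXZY k H

/-- A quasitriangular quasi-bialgebra `(H, Δ, ε, Φ, R)` over the field `k`. -/
structure QTQB where
  /-- the comultiplication (an algebra map) -/
  Δ : H →ₐ[k] H ⊗[k] H
  /-- the counit (an algebra map) -/
  ε : H →ₐ[k] k
  /-- the associator -/
  Φ : H ⊗[k] (H ⊗[k] H)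
  /-- the inverse of the associator -/
  Φinv : H ⊗[k] (H ⊗[k] H)
  Φ_right_inv : Φ * Φinv = 1
  Φ_left_inv : Φinv * Φ = 1
  /-- `(id ⊗ Δ)(Δ(h)) = Φ ((Δ ⊗ id)(Δ(h))) Φ⁻¹` -/
  quasi_coassoc : ∀ h : H,
    lTensor H Δ.toLinearMap (Δ h)
      = Φ * (TensorProduct.assoc k H H H (rTensor H Δ.toLinearMap (Δ h))) * Φinv
  /-- `(ε ⊗ id)(Δ(h)) = h` -/
  counit_left : ∀ h : H, TensorProduct.lid k H (rTensor H ε.toLinearMap (Δ h)) = h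
  /-- `(id ⊗ ε)(Δ(h)) = h` -/
  counit_right : ∀ h : H, TensorProduct.rid k H (lTensor H ε.toLinearMap (Δ h)) = h
  /-- `(id ⊗ id ⊗ Δ)(Φ) (Δ ⊗ id ⊗ id)(Φ) = (1 ⊗ Φ)(id ⊗ Δ ⊗ id)(Φ)(Φ ⊗ 1)` -/
  pentagon :
    lTensor H (lTensor H Δ.toLinearMap) Φ
      * (TensorProduct.assoc k H H (H ⊗[k] H)).toLinearMap
          (rTensor (H ⊗[k] H) Δ.toLinearMap Φ)
      = ((1 : H) ⊗ₜ[k] Φ)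
        * lTensor H ((TensorProduct.assoc k H H H).toLinearMap ∘ₗ rTensor H Δ.toLinearMap) Φ
        * lTensor H (lTensor H ((TensorProduct.mk k H H).flip 1)) Φ
  /-- `(id ⊗ ε ⊗ id)(Φ) = 1 ⊗ 1` -/
  counit_mid :
    lTensor H ((TensorProduct.lid k H).toLinearMap ∘ₗ rTensor H ε.toLinearMap) Φ = 1
  /-- the R-matrix -/
  R : H ⊗[k] H
  /-- the inverse of the R-matrix -/
  Rinv : H ⊗[k] H
  R_right_inv : R * Rinv = 1
  R_left_inv : Rinv * R = 1
  /-- `(Δ ⊗ id)(R) = Φ₃₁₂ R₁₃ Φ⁻¹₁₃₂ R₂₃ Φ` -/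
  qt1 : TensorProduct.assoc k H H H (rTensor H Δ.toLinearMap R)
      = permYZX k H Φ * leg13 k H R * permXZY k H Φinv * leg23 k H R * Φ
  /-- `(id ⊗ Δ)(R) = Φ⁻¹₂₃₁ R₁₃ Φ₂₁₃ R₁₂ Φ⁻¹` -/
  qt2 : lTensor H Δ.toLinearMap R
      = permZXY k H Φinv * leg13 k H R * permYXZ k H Φ * leg12 k H R * Φinv
  /-- `Δᶜᵒᵖ(h) R = R Δ(h)` -/
  qt3 : ∀ h : H, (TensorProduct.comm k H H) (Δ h) * R = R * Δ h

variable {k H}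

/-- The multiplication of `H*_R`: `(f · g)(h) = Σ g(h₁ R²) f(h₂ R¹)`,
i.e. `f · g = Σ (R² ⇀ g)(R¹ ⇀ f)`. -/
def QTQB.mulR (Q : QTQB k H) (f g : Module.Dual k H) : Module.Dual k H :=
  LinearMap.mul' k k ∘ₗ TensorProduct.map g f
    ∘ₗ LinearMap.mulRight k ((TensorProduct.comm k H H) Q.R) ∘ₗ Q.Δ.toLinearMap

/-!
Contracting the first two legs of the pentagon with `ε` shows that `(ε ⊗ id ⊗ id)(Φ)` is
idempotent; being invertible, it is `1`. Contracting the first leg of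
`(Δ ⊗ id)(R) = Φ₃₁₂ R₁₃ Φ⁻¹₁₃₂ R₂₃ Φ` then leaves `R = (1 ⊗ (ε ⊗ id)(R)) R`, and contracting the
middle leg of `(id ⊗ Δ)(R) = Φ⁻¹₂₃₁ R₁₃ Φ₂₁₃ R₁₂ Φ⁻¹` leaves `R = R ((id ⊗ ε)(R) ⊗ 1)`. So `R` is
counital, which makes `ε` a unit. The left action is compatible with the product because
`Δ(h) R₂₁ = R₂₁ Δᶜᵒᵖ(h)`, the right one because `Δ` is multiplicative.
-/

section Contraction

variable {S A B C : Type*} [CommSemiring S] [Semiring A] [Algebra S A]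
  [Semiring B] [Algebra S B] [Semiring C] [Algebra S C]

lemma tensor_comm_one : TensorProduct.comm S A B 1 = 1 :=
  map_one (Algebra.TensorProduct.comm S A B)

lemma tensor_comm_mul (t u : A ⊗[S] B) : TensorProduct.comm S A B (t * u) =
    TensorProduct.comm S A B t * TensorProduct.comm S A B u :=
  map_mul (Algebra.TensorProduct.comm S A B) t u

/-- The slice map `ε ⊗ id : A ⊗ B → B` of a character `ε` of `A`. -/
def contractFst (ε : A →ₐ[S] S) : A ⊗[S] B →ₐ[S] B :=
  (Algebra.TensorProduct.lid S B).toAlgHom.comp (Algebra.TensorProduct.map ε (AlgHom.id S B))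

/-- The slice map `id ⊗ ε : B ⊗ A → B` of a character `ε` of `A`. -/
def contractSnd (ε : A →ₐ[S] S) : B ⊗[S] A →ₐ[S] B :=
  (Algebra.TensorProduct.rid S S B).toAlgHom.comp (Algebra.TensorProduct.map (AlgHom.id S B) ε)

/-- The slice map `id ⊗ ε ⊗ id : B ⊗ A ⊗ C → B ⊗ C` of a character `ε` of `A`. -/
def contractMid (ε : A →ₐ[S] S) : B ⊗[S] (A ⊗[S] C) →ₐ[S] B ⊗[S] C :=
  Algebra.TensorProduct.map (AlgHom.id S B) (contractFst ε)

variable (ε : A →ₐ[S] S)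

@[simp]
lemma contractFst_tmul (a : A) (b : B) : contractFst ε (a ⊗ₜ[S] b) = ε a • b := by
  simp [contractFst]

@[simp]
lemma contractSnd_tmul (b : B) (a : A) : contractSnd ε (b ⊗ₜ[S] a) = ε a • b := by
  simp [contractSnd]

@[simp]
lemma contractMid_tmul (b : B) (t : A ⊗[S] C) :
    contractMid ε (b ⊗ₜ[S] t) = b ⊗ₜ[S] contractFst ε t := by
  simp [contractMid]

lemma contractFst_comm (t : B ⊗[S] A) :
    contractFst ε (TensorProduct.comm S B A t) = contractSnd ε t := by
  induction t with
  | zero => simp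
  | tmul b a => simp
  | add x y hx hy => simp [hx, hy]

lemma contractSnd_comm (t : A ⊗[S] B) :
    contractSnd ε (TensorProduct.comm S A B t) = contractFst ε t := by
  rw [← contractFst_comm, TensorProduct.comm_comm]

lemma contractFst_lTensor (f : B →ₗ[S] C) (t : A ⊗[S] B) :
    contractFst ε (lTensor A f t) = f (contractFst ε t) := by
  induction t with
  | zero => simp
  | tmul a b => simp
  | add x y hx hy => simp [hx, hy]

lemma contractFst_assoc (t : (A ⊗[S] B) ⊗[S] C) :
    contractFst ε (TensorProduct.assoc S A B C t)
      = rTensor C (contractFst ε : A ⊗[S] B →ₐ[S] B).toLinearMap t := by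
  refine LinearMap.congr_fun (f := (contractFst ε).toLinearMap ∘ₗ
    (TensorProduct.assoc S A B C).toLinearMap) ?_ t
  ext a b c
  simp [TensorProduct.smul_tmul']

lemma contractFst_contractMid (t : A ⊗[S] (A ⊗[S] B)) :
    contractFst ε (contractMid ε t) = contractFst ε (contractFst ε t) :=
  contractFst_lTensor ε (contractFst ε).toLinearMap t

lemma mul'_map_character_right (p : Module.Dual S B) (t : B ⊗[S] A) :
    LinearMap.mul' S S (TensorProduct.map p ε.toLinearMap t) = p (contractSnd ε t) := by
  induction t with
  | zero => simp
  | tmul b a => simp [mul_comm]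
  | add x y hx hy => simp [hx, hy]

lemma mul'_map_character_left (p : Module.Dual S B) (t : A ⊗[S] B) :
    LinearMap.mul' S S (TensorProduct.map ε.toLinearMap p t) = p (contractFst ε t) := by
  induction t with
  | zero => simp
  | tmul a b => simp
  | add x y hx hy => simp [hx, hy]

end Contraction

section Legs

variable (ε : H →ₐ[k] k)

lemma contractFst_permYZX (t : H ⊗[k] (H ⊗[k] H)) :
    contractFst ε (permYZX k H t) = TensorProduct.comm k H H (contractMid ε t) := by
  refine LinearMap.congr_fun (f := (contractFst ε).toLinearMap ∘ₗ permYZX k H)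
    (g := (TensorProduct.comm k H H).toLinearMap ∘ₗ (contractMid ε).toLinearMap) ?_ t
  ext x y z
  simp [permYZX, permXZY, permYXZ, TensorProduct.smul_tmul']

lemma contractFst_permXZY (t : H ⊗[k] (H ⊗[k] H)) :
    contractFst ε (permXZY k H t) = TensorProduct.comm k H H (contractFst ε t) :=
  contractFst_lTensor ε (TensorProduct.comm k H H).toLinearMap t

lemma contractMid_permYXZ (t : H ⊗[k] (H ⊗[k] H)) :
    contractMid ε (permYXZ k H t) = contractFst ε t := by
  refine LinearMap.congr_fun (f := (contractMid ε).toLinearMap ∘ₗ permYXZ k H)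
    (g := (contractFst ε).toLinearMap) ?_ t
  ext x y z
  simp [permYXZ]

lemma contractMid_permZXY (t : H ⊗[k] (H ⊗[k] H)) :
    contractMid ε (permZXY k H t) = TensorProduct.comm k H H (contractFst ε t) := by
  rw [permZXY, LinearMap.comp_apply, contractMid_permYXZ, contractFst_permXZY]

lemma contractFst_leg12 (t : H ⊗[k] H) :
    contractFst ε (leg12 k H t) = contractFst ε t ⊗ₜ[k] 1 :=
  contractFst_assoc ε (t ⊗ₜ[k] 1)

lemma contractFst_leg13 (t : H ⊗[k] H) :
    contractFst ε (leg13 k H t) = 1 ⊗ₜ[k] contractFst ε t := by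
  rw [leg13, contractFst_lTensor, contractFst_leg12, LinearEquiv.coe_coe, TensorProduct.comm_tmul]

lemma contractFst_leg23 (t : H ⊗[k] H) : contractFst ε (leg23 k H t) = t := by
  simp [leg23]

lemma contractMid_leg12 (t : H ⊗[k] H) :
    contractMid ε (leg12 k H t) = contractSnd ε t ⊗ₜ[k] 1 := by
  induction t with
  | zero => simp [leg12]
  | tmul a b => simp [leg12, TensorProduct.smul_tmul']
  | add x y hx hy => simp_all [leg12, add_tmul]

lemma contractMid_leg13 (t : H ⊗[k] H) : contractMid ε (leg13 k H t) = t := by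
  induction t with
  | zero => simp [leg13, leg12]
  | tmul a b => simp [leg13, leg12]
  | add x y hx hy => simp_all [leg13, leg12, add_tmul]

end Legs

section RegularActions

lemma lact_sum {ι : Type*} (s : Finset ι) (h : H) (p : ι → Module.Dual k H) :
    lact h (∑ i ∈ s, p i) = ∑ i ∈ s, lact h (p i) :=
  map_sum (LinearMap.lcomp k k (LinearMap.mulRight k h)) p s

lemma lact_smul (h : H) (c : k) (p : Module.Dual k H) : lact h (c • p) = c • lact h p :=
  LinearMap.smul_comp _ _ _

lemma lact_character (ε : H →ₐ[k] k) (h : H) : lact h ε.toLinearMap = ε h • ε.toLinearMap := by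
  ext x
  simp [lact, mul_comm]

lemma ract_character (ε : H →ₐ[k] k) (h : H) : ract h ε.toLinearMap = ε h • ε.toLinearMap := by
  ext x
  simp [ract]

lemma map_lact (p q : Module.Dual k H) (a b : H) (t : H ⊗[k] H) :
    TensorProduct.map (lact a p) (lact b q) t = TensorProduct.map p q (t * (a ⊗ₜ[k] b)) := by
  refine LinearMap.congr_fun (g := TensorProduct.map p q ∘ₗ LinearMap.mulRight k (a ⊗ₜ[k] b)) ?_ t
  ext x y
  simp [lact]

lemma map_ract (p q : Module.Dual k H) (a b : H) (t : H ⊗[k] H) :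
    TensorProduct.map (ract a p) (ract b q) t = TensorProduct.map p q ((a ⊗ₜ[k] b) * t) := by
  refine LinearMap.congr_fun (g := TensorProduct.map p q ∘ₗ LinearMap.mulLeft k (a ⊗ₜ[k] b)) ?_ t
  ext x y
  simp [ract]

end RegularActions

namespace QTQB

variable (Q : QTQB k H)

lemma contractFst_comul (h : H) : contractFst Q.ε (Q.Δ h) = h :=
  Q.counit_left h

lemma contractSnd_comul (h : H) : contractSnd Q.ε (Q.Δ h) = h :=
  Q.counit_right h

lemma contractFst_comp_comul :
    (contractFst Q.ε).toLinearMap ∘ₗ Q.Δ.toLinearMap = LinearMap.id :=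
  LinearMap.ext Q.contractFst_comul

lemma contractFst_assoc_rTensor_comul {B : Type*} [Semiring B] [Algebra k B] (t : H ⊗[k] B) :
    contractFst Q.ε (TensorProduct.assoc k H H B (rTensor B Q.Δ.toLinearMap t)) = t := by
  rw [contractFst_assoc, ← LinearMap.rTensor_comp_apply, contractFst_comp_comul,
    LinearMap.rTensor_id_apply]

lemma contractMid_lTensor_comul {B : Type*} [Semiring B] [Algebra k B] (t : B ⊗[k] H) :
    contractMid Q.ε (lTensor B Q.Δ.toLinearMap t) = t := by
  change lTensor B (contractFst Q.ε).toLinearMap (lTensor B Q.Δ.toLinearMap t) = t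
  rw [← LinearMap.lTensor_comp_apply, contractFst_comp_comul, LinearMap.lTensor_id_apply]

lemma isUnit_Φ : IsUnit Q.Φ :=
  ⟨⟨Q.Φ, Q.Φinv, Q.Φ_right_inv, Q.Φ_left_inv⟩, rfl⟩

lemma isUnit_R : IsUnit Q.R :=
  ⟨⟨Q.R, Q.Rinv, Q.R_right_inv, Q.R_left_inv⟩, rfl⟩

lemma map_Φinv_eq_one {M F : Type*} [Monoid M] [FunLike F (H ⊗[k] (H ⊗[k] H)) M]
    [MonoidHomClass F (H ⊗[k] (H ⊗[k] H)) M] {f : F} (hf : f Q.Φ = 1) : f Q.Φinv = 1 := by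
  simpa [hf] using congrArg f Q.Φ_right_inv

lemma contractMid_Φ : contractMid Q.ε Q.Φ = 1 :=
  Q.counit_mid

lemma isIdempotentElem_contractFst_Φ :
    IsIdempotentElem (contractFst Q.ε Q.Φ : H ⊗[k] H) := by
  have counit₁₂ : contractFst Q.ε (contractFst Q.ε Q.Φ) = (1 : H) := by
    rw [← contractFst_contractMid, contractMid_Φ, map_one]
  have pentagon₁₂ := congrArg (fun t ↦ contractFst Q.ε (contractFst Q.ε t)) Q.pentagon.symm
  simpa [contractFst_lTensor, contractFst_assoc_rTensor_comul, counit₁₂,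
    isIdempotentElem_iff, ← Algebra.TensorProduct.one_def] using pentagon₁₂

lemma contractFst_Φ : contractFst Q.ε Q.Φ = (1 : H ⊗[k] H) :=
  (IsIdempotentElem.iff_eq_one_of_isUnit (Q.isUnit_Φ.map (contractFst Q.ε))).mp
    Q.isIdempotentElem_contractFst_Φ

lemma contractFst_Φinv : contractFst Q.ε Q.Φinv = (1 : H ⊗[k] H) :=
  Q.map_Φinv_eq_one Q.contractFst_Φ

lemma contractMid_Φinv : contractMid Q.ε Q.Φinv = 1 :=
  Q.map_Φinv_eq_one Q.contractMid_Φ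

lemma contractFst_R : contractFst Q.ε Q.R = 1 := by
  have contracted_hexagon : Q.R = (1 ⊗ₜ[k] contractFst Q.ε Q.R) * Q.R := by
    simpa [contractFst_assoc_rTensor_comul, contractFst_permYZX, contractFst_permXZY,
      contractFst_leg13, contractFst_leg23, contractFst_Φ, contractFst_Φinv, contractMid_Φ,
      tensor_comm_one]
      using congrArg (contractFst Q.ε) Q.qt1
  have one_tmul_eq_one : (1 : H) ⊗ₜ[k] contractFst Q.ε Q.R = 1 :=
    Q.isUnit_R.mul_eq_right.mp contracted_hexagon.symm
  simpa using congrArg (contractFst Q.ε) one_tmul_eq_one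

lemma contractSnd_R : contractSnd Q.ε Q.R = 1 := by
  have contracted_hexagon : Q.R = Q.R * (contractSnd Q.ε Q.R ⊗ₜ[k] 1) := by
    simpa [contractMid_lTensor_comul, contractMid_permZXY, contractMid_permYXZ,
      contractMid_leg13, contractMid_leg12, contractFst_Φ, contractFst_Φinv, contractMid_Φinv,
      tensor_comm_one]
      using congrArg (contractMid Q.ε) Q.qt2
  have tmul_one_eq_one : contractSnd Q.ε Q.R ⊗ₜ[k] (1 : H) = 1 :=
    Q.isUnit_R.mul_eq_left.mp contracted_hexagon.symm
  simpa using congrArg (contractSnd Q.ε) tmul_one_eq_one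

lemma mulR_apply (f g : Module.Dual k H) (x : H) :
    Q.mulR f g x = LinearMap.mul' k k
      (TensorProduct.map g f (Q.Δ x * TensorProduct.comm k H H Q.R)) :=
  rfl

lemma counit_mulR (f : Module.Dual k H) : Q.mulR Q.ε.toLinearMap f = f := by
  ext x
  rw [mulR_apply, mul'_map_character_right, map_mul, contractSnd_comm, contractFst_R,
    mul_one, contractSnd_comul]

lemma mulR_counit (f : Module.Dual k H) : Q.mulR f Q.ε.toLinearMap = f := by
  ext x
  rw [mulR_apply, mul'_map_character_left, map_mul, contractFst_comm, contractSnd_R, mul_one,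
    contractFst_comul]

lemma comul_mul_comm_R (h : H) : Q.Δ h * TensorProduct.comm k H H Q.R =
    TensorProduct.comm k H H Q.R * TensorProduct.comm k H H (Q.Δ h) := by
  simpa [tensor_comm_mul] using congrArg (TensorProduct.comm k H H) (Q.qt3 h)

lemma lact_mulR {ι : Type*} (s : Finset ι) {h : H} {a₁ a₂ : ι → H}
    (hΔ : Q.Δ h = ∑ i ∈ s, a₁ i ⊗ₜ[k] a₂ i) (f g : Module.Dual k H) :
    lact h (Q.mulR f g) = ∑ i ∈ s, Q.mulR (lact (a₁ i) f) (lact (a₂ i) g) := by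
  ext x
  calc Q.mulR f g (x * h)
      = LinearMap.mul' k k (TensorProduct.map g f
          (Q.Δ x * TensorProduct.comm k H H Q.R * TensorProduct.comm k H H (Q.Δ h))) := by
        rw [mulR_apply, map_mul Q.Δ, mul_assoc, comul_mul_comm_R, ← mul_assoc]
    _ = (∑ i ∈ s, Q.mulR (lact (a₁ i) f) (lact (a₂ i) g)) x := by
        simp only [hΔ, map_sum, TensorProduct.comm_tmul, Finset.mul_sum, LinearMap.sum_apply,
          mulR_apply, map_lact]

lemma ract_mulR {ι : Type*} (s : Finset ι) {h : H} {b₁ b₂ : ι → H}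
    (hΔ : Q.Δ h = ∑ i ∈ s, b₁ i ⊗ₜ[k] b₂ i) (f g : Module.Dual k H) :
    ract h (Q.mulR f g) = ∑ i ∈ s, Q.mulR (ract (b₂ i) f) (ract (b₁ i) g) := by
  ext x
  calc Q.mulR f g (h * x)
      = LinearMap.mul' k k (TensorProduct.map g f
          (Q.Δ h * (Q.Δ x * TensorProduct.comm k H H Q.R))) := by
        rw [mulR_apply, map_mul Q.Δ, mul_assoc]
    _ = (∑ i ∈ s, Q.mulR (ract (b₂ i) f) (ract (b₁ i) g)) x := by
        simp only [hΔ, map_sum, Finset.sum_mul, LinearMap.sum_apply, mulR_apply, map_ract]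

end QTQB

/-- Let `(H, Φ, R)` be a quasitriangular quasi-bialgebra over a field `k`.
Then `H*_R` is compatible with the `H–H^cop`-bimodule structure given by the regular
actions: for all `f, g ∈ H*` and `h, h' ∈ H` one has
`h ⇀ (f·g) ↼ h' = Σ (h₁ ⇀ f ↼ h'₂) · (h₂ ⇀ g ↼ h'₁)`
(where the Sweedler sums run over any finite representations of `Δ h` and `Δ h'`);
moreover `ε · f = f · ε = f` and `h ⇀ ε ↼ h' = ε(h) ε(h') ε`. -/
theorem heisenberg_bimodule_algebra
    {k H : Type*} [Field k] [Ring H] [Algebra k H] (Q : QTQB k H) :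
    (∀ (f g : Module.Dual k H) (h h' : H) (n m : ℕ)
        (a₁ a₂ : Fin n → H) (b₁ b₂ : Fin m → H),
        Q.Δ h = ∑ i, a₁ i ⊗ₜ[k] a₂ i →
        Q.Δ h' = ∑ j, b₁ j ⊗ₜ[k] b₂ j →
        lact h (ract h' (Q.mulR f g))
          = ∑ i, ∑ j, Q.mulR (lact (a₁ i) (ract (b₂ j) f)) (lact (a₂ i) (ract (b₁ j) g)))
    ∧ (∀ f : Module.Dual k H,
        Q.mulR Q.ε.toLinearMap f = f ∧ Q.mulR f Q.ε.toLinearMap = f)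
    ∧ (∀ h h' : H,
        lact h (ract h' (Q.ε.toLinearMap : Module.Dual k H))
          = (Q.ε h * Q.ε h') • (Q.ε.toLinearMap : Module.Dual k H)) := by
  refine ⟨fun f g h h' n m a₁ a₂ b₁ b₂ hh hh' ↦ ?_,
    fun f ↦ ⟨Q.counit_mulR f, Q.mulR_counit f⟩, fun h h' ↦ ?_⟩
  · rw [Q.ract_mulR _ hh', lact_sum, Finset.sum_comm]
    exact Finset.sum_congr rfl fun j _ ↦ Q.lact_mulR _ hh _ _
  · rw [ract_character, lact_smul, lact_character, smul_smul, mul_comm]
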